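/- Let q, q̃ be real-valued Lebesgue-integrable functions on [0,T], h, h̃ ∈ ℝ, with associated solutions S, φ and S̃, φ̃. Let M : ℂ → ℂ be any function and set Φ(x,λ) = S(x,λ) + M(λ)·φ(x,λ) and Φ̃(x,λ) = S̃(x,λ) + M(λ)·φ̃(x,λ) (the same M for both). Fix δ ∈ (0,π/2) and suppose there exist constants K > 0 and R ≥ 1 such that for all ρ with arg ρ ∈ [δ, π−δ] and |ρ| ≥ R and all x ∈ [0,T]: |Φ(x,ρ²) − (iρ)^{−1} e^{iρx}| ≤ K|ρ|^{−2} e^{−τx}, |Φ'(x,ρ²) − e^{iρx}| ≤ K|ρ|^{−1} e^{−τx}, and the same two bounds hold for Φ̃, Φ̃', where τ = Im ρ. Then q(x) = q̃(x) for almost every x ∈ [0,T] and h = h̃. -/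

import Mathlib

/-!
Put `G ρ = S(x, ρ²) φ̃(x, ρ²) - φ(x, ρ²) S̃(x, ρ²)`. Replacing `S` by `Φ = S + M φ` and `S̃` by
`Φ̃ = S̃ + M φ̃` does not change `G`, so in the sector `δ ≤ arg ρ ≤ π - δ` the decay of the Weyl
solutions beats the growth of `φ` and `φ̃` and `G ρ = O(1/ρ)`. As `G` is entire, even and of
exponential type, Phragmén–Lindelöf and Liouville give `G = 0`. Already at one value of the spectral
parameter, `S φ̃ = φ S̃` and the Wronskian identities force `φ = φ̃` and `S = S̃`, and the potential
and `h` are read off from these solutions.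
-/

open MeasureTheory Set Complex

/-- `SLSol q T lam y y'` means: on `[0,T]`, `y` and `y'` are absolutely continuous,
`y'` is the derivative of `y`, and `-y'' + q y = lam y` holds a.e., expressed in
the equivalent integral (Carathéodory) form. -/
def SLSol (q : ℝ → ℝ) (T : ℝ) (lam : ℂ) (y y' : ℝ → ℂ) : Prop :=
  (∀ x ∈ Icc (0:ℝ) T, y x = y 0 + ∫ t in (0:ℝ)..x, y' t) ∧
  (∀ x ∈ Icc (0:ℝ) T, y' x = y' 0 + ∫ t in (0:ℝ)..x, ((q t : ℂ) - lam) * y t)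

/-! ### Primitives of integrable functions -/

lemma absolutelyContinuousOnInterval_of_dist_le {X Y : Type*} [PseudoMetricSpace X]
    [PseudoMetricSpace Y] {f : ℝ → X} {g : ℝ → Y} {a b K : ℝ}
    (hg : AbsolutelyContinuousOnInterval g a b)
    (hfg : ∀ x ∈ uIcc a b, ∀ y ∈ uIcc a b, dist (f x) (f y) ≤ K * dist (g x) (g y)) :
    AbsolutelyContinuousOnInterval f a b := by
  have hlim : Filter.Tendsto
      (fun E : ℕ × (ℕ → ℝ × ℝ) => K * ∑ i ∈ Finset.range E.1, dist (g (E.2 i).1) (g (E.2 i).2))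
      (AbsolutelyContinuousOnInterval.totalLengthFilter ⊓
        Filter.principal (AbsolutelyContinuousOnInterval.disjWithin a b)) (nhds 0) := by
    simpa using Filter.Tendsto.const_mul K hg
  refine squeeze_zero' (.of_forall fun E => Finset.sum_nonneg fun _ _ => dist_nonneg) ?_ hlim
  refine Filter.eventually_inf_principal.2 (.of_forall fun E hE => ?_)
  rw [Finset.mul_sum]
  exact Finset.sum_le_sum fun i hi => hfg _ (hE.1 i hi).1 _ (hE.1 i hi).2

lemma intervalIntegrable_of_mem_Icc {E : Type*} [NormedAddCommGroup E] {g : ℝ → E} {a b x : ℝ}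
    (hg : IntegrableOn g (Icc a b)) (hx : x ∈ Icc a b) : IntervalIntegrable g volume a x :=
  (intervalIntegrable_iff_integrableOn_Icc_of_le hx.1).2 (hg.mono_set (Icc_subset_Icc_right hx.2))

/-- On `[a,b]` the function `f` is absolutely continuous with a.e. derivative `g`, expressed as `f`
being a primitive of the integrable function `g`. Nothing is claimed if `b < a`. -/
def IsPrimitiveOn {E : Type*} [NormedAddCommGroup E] [NormedSpace ℝ E] (f g : ℝ → E) (a b : ℝ) :
    Prop :=
  IntegrableOn g (Icc a b) ∧ ∀ x ∈ Icc a b, f x = f a + ∫ t in a..x, g t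

namespace IsPrimitiveOn

section NormedSpace

variable {E : Type*} [NormedAddCommGroup E] [NormedSpace ℝ E] {f g F G : ℝ → E} {a b : ℝ}

lemma mono (hf : IsPrimitiveOn f g a b) {x : ℝ} (hx : x ∈ Icc a b) : IsPrimitiveOn f g a x :=
  ⟨hf.1.mono_set (Icc_subset_Icc_right hx.2), fun z hz => hf.2 z ⟨hz.1, hz.2.trans hx.2⟩⟩

lemma add (hf : IsPrimitiveOn f g a b) (hF : IsPrimitiveOn F G a b) :
    IsPrimitiveOn (fun x => f x + F x) (fun x => g x + G x) a b := by
  refine ⟨hf.1.add hF.1, fun x hx => ?_⟩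
  simp only [intervalIntegral.integral_add (intervalIntegrable_of_mem_Icc hf.1 hx)
    (intervalIntegrable_of_mem_Icc hF.1 hx), hf.2 x hx, hF.2 x hx]
  abel

lemma const_smul {𝕜 : Type*} [RCLike 𝕜] [NormedSpace 𝕜 E] (c : 𝕜) (hf : IsPrimitiveOn f g a b) :
    IsPrimitiveOn (fun x => c • f x) (fun x => c • g x) a b :=
  ⟨hf.1.smul c, fun x hx => by
    rw [intervalIntegral.integral_smul, ← smul_add, ← hf.2 x hx]⟩

lemma const_add (c : E) (hg : IntegrableOn g (Icc a b)) :
    IsPrimitiveOn (fun x => c + ∫ t in a..x, g t) g a b :=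
  ⟨hg, fun x _ => by simp⟩

lemma absolutelyContinuousOnInterval (hf : IsPrimitiveOn f g a b) (hab : a ≤ b) :
    AbsolutelyContinuousOnInterval f a b := by
  have hgb := intervalIntegrable_of_mem_Icc hf.1 (right_mem_Icc.2 hab)
  refine absolutelyContinuousOnInterval_of_dist_le (K := 1)
    (hgb.norm.absolutelyContinuousOnInterval_intervalIntegral left_mem_uIcc) fun x hx y hy => ?_
  rw [uIcc_of_le hab] at hx hy
  have hgx := intervalIntegrable_of_mem_Icc hf.1 hx
  have hgy := intervalIntegrable_of_mem_Icc hf.1 hy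
  rw [one_mul, hf.2 x hx, hf.2 y hy, dist_add_left, dist_eq_norm, dist_eq_norm,
    intervalIntegral.integral_interval_sub_left hgx hgy,
    intervalIntegral.integral_interval_sub_left hgx.norm hgy.norm]
  exact intervalIntegral.norm_integral_le_abs_integral_norm

lemma continuousOn (hf : IsPrimitiveOn f g a b) : ContinuousOn f (Icc a b) := by
  rcases le_total a b with hab | hba
  · simpa [uIcc_of_le hab] using (hf.absolutelyContinuousOnInterval hab).continuousOn
  · exact (subsingleton_Icc_of_ge hba).continuousOn f

variable [CompleteSpace E]

lemma ae_hasDerivAt (hf : IsPrimitiveOn f g a b) :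
    ∀ᵐ x, x ∈ Icc a b → HasDerivAt f (g x) x := by
  rcases lt_or_ge b a with hba | hab
  · simp [Icc_eq_empty_of_lt hba]
  filter_upwards [(intervalIntegrable_of_mem_Icc hf.1 (right_mem_Icc.2 hab)).ae_hasDerivAt_integral,
    volume.ae_ne a, volume.ae_ne b] with x hx hxa hxb hxI
  have hder := (hx (by rwa [uIcc_of_le hab]) a left_mem_uIcc).const_add (f a)
  refine hder.congr_of_eventuallyEq ?_
  filter_upwards [Icc_mem_nhds (hxI.1.lt_of_ne' hxa) (hxI.2.lt_of_ne hxb)] with z hz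
  exact hf.2 z hz

lemma of_ae_hasDerivAt (hf : AbsolutelyContinuousOnInterval f a b) (hg : IntegrableOn g (Icc a b))
    (hfg : ∀ᵐ x, x ∈ Icc a b → HasDerivAt f (g x) x) : IsPrimitiveOn f g a b := by
  refine ⟨hg, fun x hx => ?_⟩
  have hab := hx.1.trans hx.2
  have hG := const_add (0 : E) hg
  obtain ⟨C, hC⟩ := (hf.fun_sub (hG.absolutelyContinuousOnInterval hab)).const_of_ae_hasDerivAt_zero
    (by
      filter_upwards [hfg, hG.ae_hasDerivAt] with z hfz hGz hz
      rw [uIcc_of_le hab] at hz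
      simpa using (hfz hz).fun_sub (hGz hz))
  rw [uIcc_of_le hab] at hC
  have hconst := (hC x hx).trans (hC a (left_mem_Icc.2 hab)).symm
  simp only [zero_add, intervalIntegral.integral_same, sub_zero] at hconst
  exact sub_eq_iff_eq_add.1 hconst

lemma of_contDiff (hf : ContDiff ℝ 1 f) : IsPrimitiveOn f (deriv f) a b :=
  of_ae_hasDerivAt hf.contDiffOn.absolutelyContinuousOnInterval
    (hf.continuous_deriv le_rfl).continuousOn.integrableOn_Icc
    (.of_forall fun x _ => (hf.differentiable one_ne_zero x).hasDerivAt)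

lemma ae_eq_of_eqOn (hf : IsPrimitiveOn f g a b) (hF : IsPrimitiveOn F G a b)
    (h : EqOn f F (Icc a b)) : ∀ᵐ x ∂volume.restrict (Icc a b), g x = G x := by
  rw [← restrict_Ioo_eq_restrict_Icc, ae_restrict_iff' measurableSet_Ioo]
  filter_upwards [hf.ae_hasDerivAt, hF.ae_hasDerivAt] with x hfx hFx hx
  refine (hfx (Ioo_subset_Icc_self hx)).unique
    ((hFx (Ioo_subset_Icc_self hx)).congr_of_eventuallyEq ?_)
  filter_upwards [Icc_mem_nhds hx.1 hx.2] with z hz using h hz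

lemma eqOn_of_eqOn (hf : IsPrimitiveOn f g a b) (hF : IsPrimitiveOn F G a b) (hab : a < b)
    (hg : ContinuousOn g (Icc a b)) (hG : ContinuousOn G (Icc a b)) (h : EqOn f F (Icc a b)) :
    EqOn g G (Icc a b) :=
  Measure.eqOn_Icc_of_ae_eq volume hab.ne (hf.ae_eq_of_eqOn hF h) hg hG

lemma comp {F : ℝ → E} {f g : ℝ → ℝ} (hF : ContDiff ℝ 1 F) (hf : IsPrimitiveOn f g a b) :
    IsPrimitiveOn (fun x => F (f x)) (fun x => g x • deriv F (f x)) a b := by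
  rcases lt_or_ge b a with hba | hab
  · simp [IsPrimitiveOn, Icc_eq_empty_of_lt hba]
  have hF' : ContinuousOn (fun x => deriv F (f x)) (Icc a b) :=
    (hF.continuous_deriv le_rfl).comp_continuousOn hf.continuousOn
  refine of_ae_hasDerivAt ?_ (hf.1.smul_continuousOn hF' isCompact_Icc) ?_
  · obtain ⟨K, hK⟩ := hF.contDiffOn.exists_lipschitzOnWith one_ne_zero
      (convex_Icc (sInf (f '' Icc a b)) (sSup (f '' Icc a b))) isCompact_Icc
    have hmem : ∀ x ∈ uIcc a b, f x ∈ Icc (sInf (f '' Icc a b)) (sSup (f '' Icc a b)) :=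
      fun x hx => by
        rw [← hf.continuousOn.image_Icc hab]
        exact mem_image_of_mem f (uIcc_of_le hab ▸ hx)
    exact absolutelyContinuousOnInterval_of_dist_le (hf.absolutelyContinuousOnInterval hab)
      fun x hx y hy => hK.dist_le_mul _ (hmem x hx) _ (hmem y hy)
  · filter_upwards [hf.ae_hasDerivAt] with x hx hxI
    exact (hF.differentiable one_ne_zero _).hasDerivAt.scomp x (hx hxI)

end NormedSpace

lemma mul {A : Type*} [NormedField A] [NormedAlgebra ℝ A] [CompleteSpace A] {f g F G : ℝ → A}
    {a b : ℝ} (hf : IsPrimitiveOn f g a b) (hF : IsPrimitiveOn F G a b) :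
    IsPrimitiveOn (fun x => f x * F x) (fun x => g x * F x + f x * G x) a b := by
  rcases lt_or_ge b a with hba | hab
  · simp [IsPrimitiveOn, Icc_eq_empty_of_lt hba]
  refine of_ae_hasDerivAt ?_ ((hf.1.mul_continuousOn hF.continuousOn isCompact_Icc).add
    (hF.1.continuousOn_mul hf.continuousOn isCompact_Icc)) ?_
  · simpa using (hf.absolutelyContinuousOnInterval hab).fun_smul
      (hF.absolutelyContinuousOnInterval hab)
  · filter_upwards [hf.ae_hasDerivAt, hF.ae_hasDerivAt] with x hfx hFx hx
    exact (hfx hx).mul (hFx hx)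

end IsPrimitiveOn

lemma le_mul_exp_of_le_add_integral {k u : ℝ → ℝ} {a b c : ℝ} (hk : IntegrableOn k (Icc a b))
    (hk0 : ∀ x, 0 ≤ k x) (hu : ContinuousOn u (Icc a b))
    (h : ∀ x ∈ Icc a b, u x ≤ c + ∫ t in a..x, k t * u t) {x : ℝ} (hx : x ∈ Icc a b) :
    u x ≤ c * Real.exp (∫ t in a..x, k t) := by
  set κ : ℝ → ℝ := fun x => 0 + ∫ t in a..x, k t with hκ
  set v : ℝ → ℝ := fun x => c + ∫ t in a..x, k t * u t
  have hexp : ContDiff ℝ 1 fun s : ℝ => Real.exp (-s) := by fun_prop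
  have hderiv (s : ℝ) : deriv (fun s : ℝ => Real.exp (-s)) s = -Real.exp (-s) := by
    simpa using ((hasDerivAt_id s).neg.exp).deriv
  have hw := ((IsPrimitiveOn.const_add 0 hk).comp hexp).mul
    (IsPrimitiveOn.const_add c (hk.mul_continuousOn hu isCompact_Icc))
  have hle : Real.exp (-κ x) * v x ≤ c := by
    have hwx := hw.2 x hx
    simp only [hderiv, intervalIntegral.integral_same, add_zero, neg_zero, Real.exp_zero, one_mul,
      smul_eq_mul] at hwx
    refine hwx.trans_le (add_le_of_nonpos_right ?_)
    rw [← neg_nonneg, ← intervalIntegral.integral_neg]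
    refine intervalIntegral.integral_nonneg hx.1 fun t ht => ?_
    have := mul_nonneg (mul_nonneg (hk0 t) (Real.exp_pos (-κ t)).le)
      (sub_nonneg.2 (h t ⟨ht.1, ht.2.trans hx.2⟩))
    simp only [hκ] at this
    linarith
  calc u x ≤ v x := h x hx
    _ = Real.exp (-κ x) * v x * Real.exp (κ x) := by
      rw [mul_right_comm, ← Real.exp_add, neg_add_cancel, Real.exp_zero, one_mul]
    _ ≤ c * Real.exp (κ x) := by gcongr
    _ = c * Real.exp (∫ t in a..x, k t) := by simp only [hκ, zero_add]

namespace IsPrimitiveOn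

lemma eq_exp_mul_add_integral {u f : ℝ → ℂ} {c : ℂ} {a b : ℝ}
    (hu : IsPrimitiveOn u (fun t => c * u t + f t) a b) {x : ℝ} (hx : x ∈ Icc a b) :
    u x = exp (c * (x - a)) * u a + ∫ t in a..x, exp (c * (x - t)) * f t := by
  have hexp : ContDiff ℝ 1 fun t : ℝ => exp (c * (x - t)) :=
    (contDiff_const.mul (contDiff_const.sub ofRealCLM.contDiff)).cexp
  have hderiv (t : ℝ) : deriv (fun t : ℝ => exp (c * (x - t))) t = -c * exp (c * (x - t)) := by
    have := (((hasDerivAt_id t).ofReal_comp.const_sub (x : ℂ)).const_mul c).cexp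
    simpa [mul_comm] using this.deriv
  have hw := ((of_contDiff hexp).mul (hu.mono hx)).2 x (right_mem_Icc.2 hx.1)
  simp only [hderiv, sub_self, mul_zero, Complex.exp_zero, one_mul] at hw
  rw [hw]
  congr 1
  exact intervalIntegral.integral_congr fun t _ => by ring

lemma norm_mul_exp_le {u f : ℝ → ℂ} {c : ℂ} {a b m : ℝ}
    (hu : IsPrimitiveOn u (fun t => c * u t + f t) a b) (hf : IntegrableOn f (Icc a b))
    (hm : c.re ≤ m) {x : ℝ} (hx : x ∈ Icc a b) :
    ‖u x‖ * Real.exp (-(m * x)) ≤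
      ‖u a‖ * Real.exp (-(m * a)) + ∫ t in a..x, ‖f t‖ * Real.exp (-(m * t)) := by
  have hfx := (intervalIntegrable_of_mem_Icc hf hx).norm
  have hexp {t : ℝ} (ht : t ≤ x) :
      ‖exp (c * (x - t))‖ * Real.exp (-(m * x)) ≤ Real.exp (-(m * t)) := by
    rw [norm_exp, ← Real.exp_add, Real.exp_le_exp, ← ofReal_sub, re_mul_ofReal]
    nlinarith
  have hcexp : Continuous fun t : ℝ => ‖exp (c * (x - t))‖ * Real.exp (-(m * x)) := by fun_prop
  have hmexp : Continuous fun t : ℝ => Real.exp (-(m * t)) := by fun_prop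
  have hint : ‖∫ t in a..x, exp (c * (x - t)) * f t‖ * Real.exp (-(m * x)) ≤
      ∫ t in a..x, ‖f t‖ * Real.exp (-(m * t)) := calc
    _ ≤ (∫ t in a..x, ‖exp (c * (x - t)) * f t‖) * Real.exp (-(m * x)) := by
      gcongr
      exact intervalIntegral.norm_integral_le_integral_norm hx.1
    _ = ∫ t in a..x, ‖f t‖ * (‖exp (c * (x - t))‖ * Real.exp (-(m * x))) := by
      rw [← intervalIntegral.integral_mul_const]
      exact intervalIntegral.integral_congr fun t _ => by simp only [norm_mul]; ring
    _ ≤ _ := by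
      refine intervalIntegral.integral_mono_on hx.1 (hfx.mul_continuousOn hcexp.continuousOn)
        (hfx.mul_continuousOn hmexp.continuousOn) fun t ht => ?_
      gcongr
      exact hexp ht.2
  calc ‖u x‖ * Real.exp (-(m * x))
      ≤ (‖exp (c * (x - a)) * u a‖ + ‖∫ t in a..x, exp (c * (x - t)) * f t‖)
          * Real.exp (-(m * x)) := by
        rw [hu.eq_exp_mul_add_integral hx]
        gcongr
        exact norm_add_le _ _
    _ = ‖u a‖ * (‖exp (c * (x - a))‖ * Real.exp (-(m * x)))
          + ‖∫ t in a..x, exp (c * (x - t)) * f t‖ * Real.exp (-(m * x)) := by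
        rw [norm_mul]; ring
    _ ≤ _ := by
        gcongr
        exact hexp hx.1

end IsPrimitiveOn

/-! ### Entire functions decaying in a sector -/

lemma exists_exp_eq_or_exp_eq_neg {ρ : ℂ} (hρ : ρ ≠ 0) (a : ℝ) :
    ∃ z : ℂ, z.im ∈ Ico a (a + Real.pi) ∧ (exp z = ρ ∨ exp z = -ρ) := by
  set n := toIcoDiv Real.pi_pos a (log ρ).im
  refine ⟨log ρ - n * (Real.pi * I), ?_, ?_⟩
  · convert toIcoMod_mem_Ico Real.pi_pos a (log ρ).im using 1
    simp [n]
  · rw [Complex.exp_sub, exp_log hρ, exp_int_mul, exp_pi_mul_I]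
    rcases n.even_or_odd with hn | hn
    · simp [hn.neg_one_zpow]
    · simp [hn.neg_one_zpow, div_neg]

/-- The complementary sectors have opening `2 * δ < π`, so the Phragmén–Lindelöf principle applies
to them; `exp` carries it over from the strip `|im z| ≤ δ`. -/
lemma norm_le_of_norm_le_sector {G : ℂ → ℂ} {A B C δ : ℝ} (hG : Differentiable ℂ G)
    (heven : ∀ ρ, G (-ρ) = G ρ) (hgrow : ∀ ρ, ‖G ρ‖ ≤ A * Real.exp (B * ‖ρ‖)) (hδ0 : 0 < δ)
    (hδπ : δ < Real.pi / 2) (hsec : ∀ ρ, arg ρ ∈ Icc δ (Real.pi - δ) → ‖G ρ‖ ≤ C) (ρ : ℂ) :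
    ‖G ρ‖ ≤ C := by
  have hA : 0 ≤ A := by simpa using (norm_nonneg _).trans (hgrow 0)
  have hupper (z : ℂ) (hz : z.im ∈ Icc δ (Real.pi - δ)) : ‖G (exp z)‖ ≤ C :=
    hsec _ (by rwa [← log_im, log_exp (by linarith [hz.1]) (by linarith [hz.2])])
  have hstrip (z : ℂ) (hz : -δ ≤ z.im) (hz' : z.im ≤ δ) : ‖G (exp z)‖ ≤ C := by
    refine PhragmenLindelof.horizontal_strip (f := fun z => G (exp z)) (a := -δ) (b := δ)
      (hG.comp differentiable_exp).diffContOnCl ⟨1, ?_, |B|, ?_⟩ (fun w hw => ?_) (fun w hw => ?_)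
      hz hz'
    · rw [lt_div_iff₀ (by linarith)]
      linarith
    · refine .of_bound A (.of_forall fun w => (hgrow _).trans ?_)
      rw [Real.norm_of_nonneg (Real.exp_pos _).le, one_mul, norm_exp]
      gcongr
      exacts [le_abs_self _, le_abs_self _]
    · have hw' := hupper (w + Real.pi * I) (by simp [hw]; linarith)
      rwa [Complex.exp_add, exp_pi_mul_I, mul_neg_one, heven] at hw'
    · exact hupper w (by rw [hw]; exact ⟨le_rfl, by linarith⟩)
  refine (dense_compl_singleton (0 : ℂ)).induction (fun ρ hρ => ?_)
    (isClosed_le hG.continuous.norm continuous_const) ρ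
  obtain ⟨z, hz, hzρ⟩ := exists_exp_eq_or_exp_eq_neg hρ (-δ)
  have hGz : G ρ = G (exp z) := by rcases hzρ with h | h <;> simp only [h, heven]
  rw [hGz]
  rcases le_total z.im δ with hzδ | hzδ
  · exact hstrip z hz.1 hzδ
  · exact hupper z ⟨hzδ, by linarith [hz.2]⟩

lemma eq_zero_of_sector_decay {G : ℂ → ℂ} {A B D R δ : ℝ} (hG : Differentiable ℂ G)
    (heven : ∀ ρ, G (-ρ) = G ρ) (hgrow : ∀ ρ, ‖G ρ‖ ≤ A * Real.exp (B * ‖ρ‖)) (hδ0 : 0 < δ)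
    (hδπ : δ < Real.pi / 2)
    (hsec : ∀ ρ, arg ρ ∈ Icc δ (Real.pi - δ) → R ≤ ‖ρ‖ → ‖G ρ‖ ≤ D * ‖ρ‖⁻¹) (ρ : ℂ) :
    G ρ = 0 := by
  obtain ⟨C, hC⟩ := (isCompact_closedBall (0 : ℂ) (max R 1)).exists_bound_of_continuousOn
    hG.continuous.continuousOn
  have hbdd : ∀ ρ, ‖G ρ‖ ≤ max C |D| := by
    refine norm_le_of_norm_le_sector hG heven hgrow hδ0 hδπ fun ρ hρ => ?_
    rcases le_total ‖ρ‖ (max R 1) with h | h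
    · exact (hC ρ (by simpa using h)).trans (le_max_left _ _)
    · calc ‖G ρ‖ ≤ D * ‖ρ‖⁻¹ := hsec ρ hρ ((le_max_left _ _).trans h)
        _ ≤ |D| * 1 := by
          gcongr
          exacts [le_abs_self D, inv_le_one_of_one_le₀ ((le_max_right _ _).trans h)]
        _ ≤ max C |D| := by simp
  have hray : ∀ᶠ r : ℝ in Filter.atTop, ‖G ρ‖ ≤ D * r⁻¹ := by
    filter_upwards [Filter.eventually_ge_atTop R, Filter.eventually_gt_atTop 0] with r hr hr0
    have hn : ‖(r * I : ℂ)‖ = r := by simp [abs_of_pos hr0]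
    have hrI := hsec (r * I) (by
      rw [arg_real_mul _ hr0, arg_I]
      constructor <;> linarith) (by rwa [hn])
    rwa [hn, hG.apply_eq_apply_of_bounded
      (isBounded_iff_forall_norm_le.2 ⟨_, forall_mem_range.2 hbdd⟩) (r * I) ρ] at hrI
  have hlim : Filter.Tendsto (fun r : ℝ => D * r⁻¹) Filter.atTop (nhds 0) := by
    simpa using tendsto_inv_atTop_zero.const_mul D
  exact norm_le_zero_iff.1 (ge_of_tendsto hlim hray)

/-! ### Solutions of the Sturm–Liouville equation -/

lemma max_norm_le_max_norm_add_sub {E : Type*} [NormedAddCommGroup E] [NormedSpace ℝ E] (u v : E) :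
    max ‖u‖ ‖v‖ ≤ max ‖u + v‖ ‖u - v‖ := by
  have hu : 2 * ‖u‖ ≤ ‖u + v‖ + ‖u - v‖ := by
    simpa [← two_smul ℝ u, norm_smul] using norm_add_le (u + v) (u - v)
  have hv : 2 * ‖v‖ ≤ ‖u + v‖ + ‖u - v‖ := by
    simpa [← two_smul ℝ v, norm_smul] using norm_sub_le (u + v) (u - v)
  grind

lemma continuousOn_of_forall_continuousOn_Icc {E : Type*} [TopologicalSpace E] {f : ℝ → E} {a : ℝ}
    {s : Set ℝ} (hs : s ⊆ Ici a) (hf : ∀ z ∈ s, ContinuousOn f (Icc a z)) : ContinuousOn f s := by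
  intro x hx
  by_cases hmax : ∃ z ∈ s, x < z
  · obtain ⟨z, hz, hxz⟩ := hmax
    refine (hf z hz x ⟨hs hx, hxz.le⟩).mono_of_mem_nhdsWithin ?_
    filter_upwards [self_mem_nhdsWithin, mem_nhdsWithin_of_mem_nhds (Iio_mem_nhds hxz)]
      with w hws hwz using ⟨hs hws, (mem_Iio.1 hwz).le⟩
  · push Not at hmax
    exact (hf x hx x ⟨hs hx, le_rfl⟩).mono fun w hw => ⟨hs hw, hmax w hw⟩

/-- Carathéodory solutions of `-y'' + q y = lam y` on `[0,T]` with integrable complex potential `q`;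
`y'` is the absolutely continuous derivative of `y`. -/
structure IsSLSolution (q : ℝ → ℂ) (T : ℝ) (lam : ℂ) (y y' : ℝ → ℂ) : Prop where
  isPrimitiveOn : IsPrimitiveOn y y' 0 T
  isPrimitiveOn_deriv : IsPrimitiveOn y' (fun t => (q t - lam) * y t) 0 T

namespace IsSLSolution

variable {q qt : ℝ → ℂ} {T : ℝ} {lam mu : ℂ} {y y' z z' yt yt' zt zt' : ℝ → ℂ}

lemma mono (hy : IsSLSolution q T lam y y') {x : ℝ} (hx : x ∈ Icc 0 T) :
    IsSLSolution q x lam y y' :=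
  ⟨hy.1.mono hx, hy.2.mono hx⟩

lemma add (hy : IsSLSolution q T lam y y') (hz : IsSLSolution q T lam z z') :
    IsSLSolution q T lam (fun x => y x + z x) (fun x => y' x + z' x) :=
  ⟨hy.1.add hz.1, by simpa only [mul_add] using hy.2.add hz.2⟩

lemma const_mul (c : ℂ) (hy : IsSLSolution q T lam y y') :
    IsSLSolution q T lam (fun x => c * y x) (fun x => c * y' x) :=
  ⟨hy.1.const_smul c, by simpa only [smul_eq_mul, mul_left_comm c] using hy.2.const_smul c⟩

lemma wronskian_eq (hy : IsSLSolution q T lam y y') (hz : IsSLSolution q T mu z z')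
    {x : ℝ} (hx : x ∈ Icc 0 T) :
    y x * z' x - y' x * z x =
      y 0 * z' 0 - y' 0 * z 0 + (lam - mu) * ∫ t in (0 : ℝ)..x, y t * z t := by
  have hW := ((hy.1.mul hz.2).add ((hy.2.mul hz.1).const_smul (-1 : ℂ))).2 x hx
  rw [intervalIntegral.integral_congr (g := fun t => (lam - mu) * (y t * z t))
    fun t _ => by simp only [smul_eq_mul]; ring, intervalIntegral.integral_const_mul] at hW
  simp only [smul_eq_mul] at hW
  linear_combination hW

lemma isPrimitiveOn_deriv_add (hy : IsSLSolution q T lam y y') (c : ℂ) :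
    IsPrimitiveOn (fun t => y' t + c * y t)
      (fun t => c * (y' t + c * y t) + (q t - lam - c ^ 2) * y t) 0 T := by
  have h := hy.2.add (hy.1.const_smul c)
  simp only [smul_eq_mul] at h
  convert h using 2
  ring

lemma norm_deriv_add_mul_exp_le (hq : IntegrableOn q (Icc 0 T)) (hy : IsSLSolution q T lam y y')
    {c : ℂ} {m : ℝ} (hm : c.re ≤ m) {x : ℝ} (hx : x ∈ Icc 0 T) :
    ‖y' x + c * y x‖ * Real.exp (-(m * x)) ≤ ‖c‖ * ‖y 0‖ + ‖y' 0‖ +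
      ∫ t in (0 : ℝ)..x, ‖(q t - lam - c ^ 2) * y t‖ * Real.exp (-(m * t)) := by
  have hint : IntegrableOn (fun t => (q t - lam - c ^ 2) * y t) (Icc 0 T) :=
    ((hq.sub (integrableOn_const (by simp))).sub (integrableOn_const (by simp))).mul_continuousOn
      hy.1.continuousOn isCompact_Icc
  refine ((hy.isPrimitiveOn_deriv_add c).norm_mul_exp_le hint hm hx).trans ?_
  rw [mul_zero, neg_zero, Real.exp_zero, mul_one, add_comm (‖c‖ * _), ← norm_mul]
  gcongr
  exact norm_add_le _ _

/-- The combinations `y' ± c y` satisfy first-order equations with coefficients `±c`, coupled only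
through the perturbation `(q - lam - c ^ 2) y`. -/
lemma max_norm_mul_exp_le (hq : IntegrableOn q (Icc 0 T)) (hy : IsSLSolution q T lam y y') {c : ℂ}
    {m : ℝ} (hm : |c.re| ≤ m) {x : ℝ} (hx : x ∈ Icc 0 T) :
    max ‖y' x‖ (‖c‖ * ‖y x‖) * Real.exp (-(m * x)) ≤ ‖c‖ * ‖y 0‖ + ‖y' 0‖ +
      ∫ t in (0 : ℝ)..x, ‖(q t - lam - c ^ 2) * y t‖ * Real.exp (-(m * t)) := by
  have hpos := hy.norm_deriv_add_mul_exp_le hq ((le_abs_self _).trans hm) hx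
  have hneg := hy.norm_deriv_add_mul_exp_le (c := -c) hq ((neg_le_abs _).trans hm) hx
  rw [neg_sq, norm_neg, neg_mul, ← sub_eq_add_neg] at hneg
  rw [← norm_mul]
  refine (mul_le_mul_of_nonneg_right (max_norm_le_max_norm_add_sub (y' x) (c * y x))
    (Real.exp_pos _).le).trans ?_
  rw [max_mul_of_nonneg _ _ (Real.exp_pos _).le]
  exact max_le hpos hneg

lemma max_norm_le (hq : IntegrableOn q (Icc 0 T)) (hy : IsSLSolution q T lam y y') {c : ℂ}
    (hc : c ≠ 0) {m : ℝ} (hm : |c.re| ≤ m) {x : ℝ} (hx : x ∈ Icc 0 T) :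
    max ‖y' x‖ (‖c‖ * ‖y x‖) ≤ (‖c‖ * ‖y 0‖ + ‖y' 0‖) *
      Real.exp (m * x + ∫ t in (0 : ℝ)..x, ‖q t - lam - c ^ 2‖ / ‖c‖) := by
  set p : ℝ → ℂ := fun t => q t - lam - c ^ 2
  set u : ℝ → ℝ := fun t => max ‖y' t‖ (‖c‖ * ‖y t‖) * Real.exp (-(m * t))
  have hp : IntegrableOn p (Icc 0 T) :=
    (hq.sub (integrableOn_const (by simp))).sub (integrableOn_const (by simp))
  have hpy : IntegrableOn (fun t => ‖p t * y t‖) (Icc 0 T) :=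
    (hp.mul_continuousOn hy.1.continuousOn isCompact_Icc).norm
  have hk : IntegrableOn (fun t => ‖p t‖ / ‖c‖) (Icc 0 T) := hp.norm.div_const _
  have hexp : Continuous fun t : ℝ => Real.exp (-(m * t)) := by fun_prop
  have hu : ContinuousOn u (Icc 0 T) :=
    (hy.2.continuousOn.norm.sup (hy.1.continuousOn.norm.const_mul _)).mul hexp.continuousOn
  have hle : ∀ x ∈ Icc 0 T, u x ≤ ‖c‖ * ‖y 0‖ + ‖y' 0‖ +
      ∫ t in (0 : ℝ)..x, ‖p t‖ / ‖c‖ * u t := by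
    intro x hx
    refine (hy.max_norm_mul_exp_le hq hm hx).trans ?_
    gcongr
    refine intervalIntegral.integral_mono_on hx.1
      (intervalIntegrable_of_mem_Icc (hpy.mul_continuousOn hexp.continuousOn isCompact_Icc) hx)
      (intervalIntegrable_of_mem_Icc (hk.mul_continuousOn hu isCompact_Icc) hx) fun t _ => ?_
    calc ‖p t * y t‖ * Real.exp (-(m * t))
        = ‖p t‖ / ‖c‖ * (‖c‖ * ‖y t‖ * Real.exp (-(m * t))) := by
          rw [norm_mul]
          field_simp [norm_ne_zero_iff.2 hc]
      _ ≤ ‖p t‖ / ‖c‖ * u t := by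
          gcongr
          exact mul_le_mul_of_nonneg_right (le_max_right _ _) (Real.exp_pos _).le
  have hux := le_mul_exp_of_le_add_integral hk (fun t => by positivity) hu hle hx
  simp only [u, Real.exp_neg] at hux
  rwa [← div_eq_mul_inv, div_le_iff₀ (Real.exp_pos _), mul_assoc, ← Real.exp_add,
    add_comm _ (m * x)] at hux

lemma max_norm_le_mul_exp {x : ℝ} (hq : IntegrableOn q (Icc 0 T)) (hx : x ∈ Icc 0 T)
    (hy : IsSLSolution q x lam y y') {c : ℂ} {m L : ℝ} (hc : 1 ≤ ‖c‖) (hm : |c.re| ≤ m)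
    (hL : ‖lam + c ^ 2‖ ≤ L * ‖c‖) :
    max ‖y' x‖ (‖c‖ * ‖y x‖) ≤ (‖c‖ * ‖y 0‖ + ‖y' 0‖) *
      Real.exp ((∫ t in (0 : ℝ)..T, ‖q t‖) + (m + L) * x) := by
  have hc0 : 0 < ‖c‖ := one_pos.trans_le hc
  have hqx := intervalIntegrable_of_mem_Icc hq hx
  have hp := hqx.sub (intervalIntegrable_const (c := lam + c ^ 2))
  simp only [← sub_sub] at hp
  have hint : ∫ t in (0 : ℝ)..x, ‖q t - lam - c ^ 2‖ / ‖c‖ ≤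
      (∫ t in (0 : ℝ)..T, ‖q t‖) + L * x := calc
    _ ≤ ∫ t in (0 : ℝ)..x, (‖q t‖ + L) := by
      refine intervalIntegral.integral_mono_on hx.1 (hp.norm.div_const _)
        (hqx.norm.add intervalIntegrable_const) fun t _ => ?_
      rw [div_le_iff₀ hc0, add_mul, sub_sub]
      exact (norm_sub_le _ _).trans (add_le_add (le_mul_of_one_le_right (norm_nonneg _) hc) hL)
    _ = (∫ t in (0 : ℝ)..x, ‖q t‖) + L * x := by
      rw [intervalIntegral.integral_add hqx.norm intervalIntegrable_const,
        intervalIntegral.integral_const, sub_zero, smul_eq_mul, mul_comm x]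
    _ ≤ _ := by
      gcongr
      exact intervalIntegral.integral_mono_interval le_rfl hx.1 hx.2
        (.of_forall fun _ => norm_nonneg _)
        (intervalIntegrable_of_mem_Icc hq (right_mem_Icc.2 (hx.1.trans hx.2))).norm
  refine (hy.max_norm_le (hq.mono_set (Icc_subset_Icc_right hx.2)) (norm_pos_iff.1 hc0) hm
    (right_mem_Icc.2 hx.1)).trans ?_
  gcongr _ * Real.exp ?_
  linarith

lemma norm_le_mul_exp (hq : IntegrableOn q (Icc 0 T)) (hy : IsSLSolution q T lam y y') {c : ℂ}
    {m L : ℝ} (hc : 1 ≤ ‖c‖) (hm : |c.re| ≤ m) (hL : ‖lam + c ^ 2‖ ≤ L * ‖c‖) {x : ℝ}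
    (hx : x ∈ Icc 0 T) :
    ‖y x‖ ≤ (‖y 0‖ + ‖y' 0‖) * Real.exp ((∫ t in (0 : ℝ)..T, ‖q t‖) + (m + L) * x) := by
  refine le_of_mul_le_mul_left ?_ (one_pos.trans_le hc)
  refine ((le_max_right _ _).trans (max_norm_le_mul_exp hq hx (hy.mono hx) hc hm hL)).trans ?_
  rw [← mul_assoc, mul_add]
  gcongr
  exact le_mul_of_one_le_left (norm_nonneg _) hc

lemma norm_le_of_integrableOn (hq : IntegrableOn q (Icc 0 T)) (hy : IsSLSolution q T lam y y')
    {x : ℝ} (hx : x ∈ Icc 0 T) :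
    ‖y x‖ ≤ (‖y 0‖ + ‖y' 0‖) *
      Real.exp ((∫ t in (0 : ℝ)..T, ‖q t‖) + 3 * (√‖lam‖ + 1) * T) := by
  set k : ℝ := √‖lam‖ + 1
  have hk1 : 1 ≤ k := le_add_of_nonneg_left (Real.sqrt_nonneg _)
  have hknorm : ‖(k : ℂ)‖ = k := by rw [norm_real, Real.norm_of_nonneg (by positivity)]
  have hL : ‖lam + (k : ℂ) ^ 2‖ ≤ 2 * k * ‖(k : ℂ)‖ := by
    refine (norm_add_le _ _).trans ?_
    rw [norm_pow, hknorm]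
    nlinarith [Real.sq_sqrt (norm_nonneg lam), Real.sqrt_nonneg ‖lam‖]
  refine (hy.norm_le_mul_exp hq (m := k) (hk1.trans_eq hknorm.symm)
    (by rw [ofReal_re, abs_of_nonneg (by positivity)]) hL hx).trans ?_
  rw [← two_add_one_eq_three, add_one_mul, add_comm (2 * k)]
  gcongr
  exact hx.2

lemma norm_le_of_sq {ρ : ℂ} (hq : IntegrableOn q (Icc 0 T)) (hy : IsSLSolution q T (ρ ^ 2) y y')
    (hρ : 1 ≤ ‖ρ‖) {x : ℝ} (hx : x ∈ Icc 0 T) :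
    ‖y x‖ ≤ (‖y 0‖ + ‖y' 0‖) * Real.exp ((∫ t in (0 : ℝ)..T, ‖q t‖) + |ρ.im| * x) := by
  simpa using hy.norm_le_mul_exp hq (c := I * ρ) (m := |ρ.im|) (L := 0) (by simpa using hρ)
    (by simp) (by simp [mul_pow]) hx

lemma exists_norm_le_of_norm_sub_le_one {a b : ℂ}
    {y y' : ℝ → ℂ → ℂ} (hq : IntegrableOn q (Icc 0 T)) (hT : 0 ≤ T)
    (hy : ∀ lam, IsSLSolution q T lam (y · lam) (y' · lam)) (hy0 : ∀ lam, y 0 lam = a)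
    (hy'0 : ∀ lam, y' 0 lam = b) (mu : ℂ) :
    ∃ B, ∀ lam, ‖lam - mu‖ ≤ 1 → ∀ x ∈ Icc 0 T, ‖y x lam‖ ≤ B := by
  refine ⟨(‖a‖ + ‖b‖) * Real.exp ((∫ t in (0 : ℝ)..T, ‖q t‖) + 3 * (√(‖mu‖ + 1) + 1) * T),
    fun lam hlam x hx => ((hy lam).norm_le_of_integrableOn hq hx).trans ?_⟩
  have hnorm : ‖lam‖ ≤ ‖mu‖ + 1 := by linarith [norm_sub_norm_le lam mu]
  rw [hy0, hy'0]
  gcongr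

/-- The Bochner integral of a non-integrable function is `0`, so integrability has to be proved: as
long as `(q - lam) y` is integrable on `[0,x]` the a priori bound controls `y'` at `x`, and
otherwise `y' x = y' 0`. -/
lemma of_integral_eq (hq : IntegrableOn q (Icc 0 T))
    (hy : ∀ x ∈ Icc 0 T, y x = y 0 + ∫ t in (0 : ℝ)..x, y' t)
    (hy' : ∀ x ∈ Icc 0 T, y' x = y' 0 + ∫ t in (0 : ℝ)..x, (q t - lam) * y t) :
    IsSLSolution q T lam y y' := by
  have hqlam : IntegrableOn (fun t => q t - lam) (Icc 0 T) := hq.sub (integrableOn_const (by simp))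
  set J : Set ℝ := {x ∈ Icc 0 T | IntegrableOn (fun t => (q t - lam) * y t) (Icc 0 x)}
  have hsol : ∀ x ∈ J, IsSLSolution q x lam y y' := fun x hx => by
    have hprim' : IsPrimitiveOn y' (fun t => (q t - lam) * y t) 0 x :=
      ⟨hx.2, fun z hz => hy' z ⟨hz.1, hz.2.trans hx.1.2⟩⟩
    exact ⟨⟨hprim'.continuousOn.integrableOn_Icc, fun z hz => hy z ⟨hz.1, hz.2.trans hx.1.2⟩⟩,
      hprim'⟩
  have hJm : MeasurableSet J := OrdConnected.measurableSet ⟨fun x hx z hz w hw =>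
    ⟨⟨hx.1.1.trans hw.1, hw.2.trans hz.1.2⟩, hz.2.mono_set (Icc_subset_Icc_right hw.2)⟩⟩
  have hJint : IntegrableOn y' J := by
    refine IntegrableOn.of_bound (C := (‖(1 : ℂ)‖ * ‖y 0‖ + ‖y' 0‖) *
      Real.exp ((∫ t in (0 : ℝ)..T, ‖q t‖) + (1 + ‖lam + 1 ^ 2‖) * T))
      (measure_lt_top_of_subset (fun _ hx => hx.1) (by simp))
      ((continuousOn_of_forall_continuousOn_Icc (fun _ hx => hx.1.1)
        fun x hx => (hsol x hx).2.continuousOn).aestronglyMeasurable hJm)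
      ((ae_restrict_iff' hJm).2 (.of_forall fun x hx => ?_))
    refine (le_max_left _ _).trans ((max_norm_le_mul_exp (c := 1) (m := 1) (L := ‖lam + 1 ^ 2‖)
      hq hx.1 (hsol x hx) (by simp) (by simp) (by simp)).trans ?_)
    gcongr
    exact hx.1.2
  have hJc : IntegrableOn y' (Icc 0 T \ J) := by
    refine (integrableOn_congr_fun (fun x hx => ?_) (measurableSet_Icc.diff hJm)).2
      (integrableOn_const (C := y' 0) (measure_ne_top_of_subset sdiff_subset (by simp)))
    have hni : ¬ IntervalIntegrable (fun t => (q t - lam) * y t) volume 0 x := fun hi =>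
      hx.2 ⟨hx.1, (intervalIntegrable_iff_integrableOn_Icc_of_le hx.1.1).1 hi⟩
    rw [hy' x hx.1, intervalIntegral.integral_undef hni, add_zero]
  have hprim : IsPrimitiveOn y y' 0 T :=
    ⟨(hJint.union hJc).mono_set (by rw [union_sdiff_self]; exact subset_union_right), hy⟩
  exact ⟨hprim, hqlam.mul_continuousOn hprim.continuousOn isCompact_Icc, hy'⟩

lemma deriv_eqOn (hy : IsSLSolution q T lam y y') (hyt : IsSLSolution qt T mu yt yt') (hT : 0 < T)
    (h : EqOn y yt (Icc 0 T)) : EqOn y' yt' (Icc 0 T) :=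
  hy.1.eqOn_of_eqOn hyt.1 hT hy.2.continuousOn hyt.2.continuousOn h

lemma deriv_mul_add_eqOn (hy : IsSLSolution q T lam y y') (hyt : IsSLSolution qt T mu yt yt')
    (hz : IsSLSolution q T lam z z') (hzt : IsSLSolution qt T mu zt zt') (hT : 0 < T)
    (h : EqOn (fun x => y x * yt x) (fun x => z x * zt x) (Icc 0 T)) :
    EqOn (fun x => y' x * yt x + y x * yt' x) (fun x => z' x * zt x + z x * zt' x) (Icc 0 T) :=
  (hy.1.mul hyt.1).eqOn_of_eqOn (hz.1.mul hzt.1) hT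
    ((hy.2.continuousOn.mul hyt.1.continuousOn).add (hy.1.continuousOn.mul hyt.2.continuousOn))
    ((hz.2.continuousOn.mul hzt.1.continuousOn).add (hz.1.continuousOn.mul hzt.2.continuousOn)) h

end IsSLSolution

/-! ### Fundamental pairs -/

/-- Solutions `φ`, `S` of `-y'' + q y = lam y` on `[0,T]` with `φ 0 = 1`, `φ' 0 = h` and `S 0 = 0`,
`S' 0 = 1`. -/
structure IsFundamentalPair (q : ℝ → ℂ) (T : ℝ) (h lam : ℂ) (φ φ' S S' : ℝ → ℂ) : Prop where
  left : IsSLSolution q T lam φ φ'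
  right : IsSLSolution q T lam S S'
  left_zero : φ 0 = 1
  left_deriv_zero : φ' 0 = h
  right_zero : S 0 = 0
  right_deriv_zero : S' 0 = 1

namespace IsFundamentalPair

section SpectralParameter

variable {q qt : ℝ → ℂ} {T : ℝ} {h ht lam mu : ℂ}
  {φ φ' S S' φt φt' St St' y y' w w' : ℝ → ℂ}

lemma wronskian_eq_one (hF : IsFundamentalPair q T h lam φ φ' S S') {x : ℝ} (hx : x ∈ Icc 0 T) :
    φ x * S' x - φ' x * S x = 1 := by
  simpa [hF.left_zero, hF.right_zero, hF.right_deriv_zero] using hF.left.wronskian_eq hF.right hx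

lemma sub_eq_mul_integral (hF : IsFundamentalPair q T h mu φ φ' S S')
    (hy : IsSLSolution q T lam y y') (hw : IsSLSolution q T mu w w') (h0 : y 0 = w 0)
    (h0' : y' 0 = w' 0) {x : ℝ} (hx : x ∈ Icc 0 T) :
    y x - w x = (lam - mu) * ∫ t in (0 : ℝ)..x, y t * (φ x * S t - S x * φ t) := by
  have hint {z z' : ℝ → ℂ} (hz : IsSLSolution q T mu z z') (c : ℂ) :
      IntervalIntegrable (fun t => c * (y t * z t)) volume 0 x :=
    (intervalIntegrable_of_mem_Icc (hy.1.continuousOn.mul hz.1.continuousOn).integrableOn_Icc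
      hx).const_mul c
  have hsplit : ∫ t in (0 : ℝ)..x, y t * (φ x * S t - S x * φ t) =
      φ x * (∫ t in (0 : ℝ)..x, y t * S t) - S x * ∫ t in (0 : ℝ)..x, y t * φ t := by
    rw [← intervalIntegral.integral_const_mul, ← intervalIntegral.integral_const_mul,
      ← intervalIntegral.integral_sub (hint hF.right _) (hint hF.left _)]
    exact intervalIntegral.integral_congr fun t _ => by ring
  have hyS := hy.wronskian_eq hF.right hx
  have hyφ := hy.wronskian_eq hF.left hx
  have hwS := hw.wronskian_eq hF.right hx
  have hwφ := hw.wronskian_eq hF.left hx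
  rw [sub_self, zero_mul, add_zero, ← h0, ← h0'] at hwS hwφ
  rw [hsplit]
  linear_combination φ x * (hyS - hwS) - S x * (hyφ - hwφ) - (y x - w x) * hF.wronskian_eq_one hx

lemma exists_norm_integral_mul_kernel_le (hF : IsFundamentalPair q T h mu φ φ' S S')
    (hT : 0 ≤ T) : ∃ D, ∀ (z : ℝ → ℂ) (N : ℝ), (∀ t ∈ Icc 0 T, ‖z t‖ ≤ N) →
      ∀ x ∈ Icc 0 T, ‖∫ t in (0 : ℝ)..x, z t * (φ x * S t - S x * φ t)‖ ≤ N * D := by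
  have hφ := hF.left.1.continuousOn
  have hS := hF.right.1.continuousOn
  obtain ⟨D, hD⟩ := (isCompact_Icc.prod isCompact_Icc).exists_bound_of_continuousOn
    (((hφ.comp continuousOn_fst fun p hp => hp.1).mul
      (hS.comp continuousOn_snd fun p hp => hp.2)).sub
    ((hS.comp continuousOn_fst fun p hp => hp.1).mul
      (hφ.comp continuousOn_snd fun p hp => hp.2)))
  have h0 : (0 : ℝ) ∈ Icc 0 T := left_mem_Icc.2 hT
  have hD0 : 0 ≤ D := (norm_nonneg _).trans (hD (0, 0) ⟨h0, h0⟩)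
  refine ⟨D * T, fun z N hz x hx => ?_⟩
  have hN : 0 ≤ N := (norm_nonneg _).trans (hz 0 h0)
  calc ‖∫ t in (0 : ℝ)..x, z t * (φ x * S t - S x * φ t)‖ ≤ N * D * |x - 0| := by
        refine intervalIntegral.norm_integral_le_of_norm_le_const fun t ht => ?_
        rw [uIoc_of_le hx.1] at ht
        have htT : t ∈ Icc 0 T := ⟨ht.1.le, ht.2.trans hx.2⟩
        rw [norm_mul]
        exact mul_le_mul (hz t htT) (hD (x, t) ⟨hx, htT⟩) (norm_nonneg _) hN
    _ ≤ N * (D * T) := by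
        rw [sub_zero, abs_of_nonneg hx.1, mul_assoc]
        gcongr
        exact hx.2

lemma intervalIntegrable_mul_kernel (hF : IsFundamentalPair q T h mu φ φ' S S')
    (hy : IsSLSolution q T lam y y') {x : ℝ} (hx : x ∈ Icc 0 T) :
    IntervalIntegrable (fun t => y t * (φ x * S t - S x * φ t)) volume 0 x :=
  intervalIntegrable_of_mem_Icc (hy.1.continuousOn.mul ((hF.right.1.continuousOn.const_mul _).sub
    (hF.left.1.continuousOn.const_mul _))).integrableOn_Icc hx

/-- Variation of constants makes the difference quotient in `lam` an integral over the solutions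
themselves; iterating it once makes the remainder quadratic. -/
lemma hasDerivAt {a b : ℂ} {y y' : ℝ → ℂ → ℂ} (hF : IsFundamentalPair q T h mu φ φ' S S')
    (hq : IntegrableOn q (Icc 0 T)) (hy : ∀ lam, IsSLSolution q T lam (y · lam) (y' · lam))
    (hy0 : ∀ lam, y 0 lam = a) (hy'0 : ∀ lam, y' 0 lam = b) {x : ℝ} (hx : x ∈ Icc 0 T) :
    HasDerivAt (y x) (∫ t in (0 : ℝ)..x, y t mu * (φ x * S t - S x * φ t)) mu := by
  have hT : 0 ≤ T := hx.1.trans hx.2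
  obtain ⟨B, hB⟩ := IsSLSolution.exists_norm_le_of_norm_sub_le_one hq hT hy hy0 hy'0 mu
  obtain ⟨D, hD⟩ := hF.exists_norm_integral_mul_kernel_le hT
  have hsub (lam : ℂ) {s : ℝ} (hs : s ∈ Icc 0 T) :=
    hF.sub_eq_mul_integral (hy lam) (hy mu) ((hy0 lam).trans (hy0 mu).symm)
      ((hy'0 lam).trans (hy'0 mu).symm) hs
  rw [hasDerivAt_iff_isLittleO]
  refine Asymptotics.IsBigO.trans_isLittleO (.of_bound (B * D * D) ?_)
    (Asymptotics.isLittleO_pow_sub_sub mu one_lt_two)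
  filter_upwards [Metric.closedBall_mem_nhds mu one_pos] with lam hlam
  rw [mem_closedBall_iff_norm] at hlam
  have hdiff : ∀ s ∈ Icc 0 T, ‖y s lam - y s mu‖ ≤ ‖lam - mu‖ * (B * D) := fun s hs => by
    rw [hsub lam hs, norm_mul]
    gcongr
    exact hD _ B (hB lam hlam) s hs
  have hrem : y x lam - y x mu -
      (lam - mu) • (∫ t in (0 : ℝ)..x, y t mu * (φ x * S t - S x * φ t)) =
      (lam - mu) * ∫ t in (0 : ℝ)..x, (y t lam - y t mu) * (φ x * S t - S x * φ t) := by
    simp only [sub_mul (y _ lam)]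
    rw [intervalIntegral.integral_sub (hF.intervalIntegrable_mul_kernel (hy lam) hx)
      (hF.intervalIntegrable_mul_kernel (hy mu) hx), hsub lam hx, smul_eq_mul, mul_sub]
  rw [hrem, norm_mul, norm_pow, norm_norm]
  refine (mul_le_mul_of_nonneg_left (hD _ _ hdiff x hx) (norm_nonneg _)).trans_eq ?_
  ring

lemma norm_mul_sub_mul_le (hF : IsFundamentalPair q T h lam φ φ' S S')
    (hFt : IsFundamentalPair qt T ht lam φt φt' St St') (hq : IntegrableOn q (Icc 0 T))
    (hqt : IntegrableOn qt (Icc 0 T)) {x : ℝ} (hx : x ∈ Icc 0 T) :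
    ‖S x * φt x - φ x * St x‖ ≤ (2 + ‖h‖ + ‖ht‖) *
      Real.exp ((∫ t in (0 : ℝ)..T, ‖q t‖) + (∫ t in (0 : ℝ)..T, ‖qt t‖) + 6 * T) *
        Real.exp (6 * T * √‖lam‖) := by
  have hφ := hF.left.norm_le_of_integrableOn hq hx
  have hS := hF.right.norm_le_of_integrableOn hq hx
  have hφt := hFt.left.norm_le_of_integrableOn hqt hx
  have hSt := hFt.right.norm_le_of_integrableOn hqt hx
  rw [hF.left_zero, hF.left_deriv_zero, norm_one] at hφ
  rw [hFt.left_zero, hFt.left_deriv_zero, norm_one] at hφt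
  rw [hF.right_zero, hF.right_deriv_zero, norm_zero, norm_one, zero_add, one_mul] at hS
  rw [hFt.right_zero, hFt.right_deriv_zero, norm_zero, norm_one, zero_add, one_mul] at hSt
  have hexp : Real.exp ((∫ t in (0 : ℝ)..T, ‖q t‖) + (∫ t in (0 : ℝ)..T, ‖qt t‖) + 6 * T) *
      Real.exp (6 * T * √‖lam‖) = Real.exp ((∫ t in (0 : ℝ)..T, ‖q t‖) + 3 * (√‖lam‖ + 1) * T) *
        Real.exp ((∫ t in (0 : ℝ)..T, ‖qt t‖) + 3 * (√‖lam‖ + 1) * T) := by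
    rw [← Real.exp_add, ← Real.exp_add]
    ring_nf
  rw [mul_assoc, hexp]
  refine (norm_sub_le _ _).trans ?_
  rw [norm_mul, norm_mul]
  refine (add_le_add (mul_le_mul hS hφt (norm_nonneg _) (Real.exp_pos _).le)
    (mul_le_mul hφ hSt (norm_nonneg _) (by positivity))).trans_eq ?_
  ring

/-- With `Φ = S + m φ` and `Φt = St + m φt` the cross product `S φt - φ St` equals `Φ φt - φ Φt`, in
which the decay of `Φ` and `Φt` compensates the growth of `φ` and `φt`. -/
lemma norm_mul_sub_mul_le_of_norm_add_mul_le {ρ m : ℂ}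
    (hF : IsFundamentalPair q T h (ρ ^ 2) φ φ' S S')
    (hFt : IsFundamentalPair qt T ht (ρ ^ 2) φt φt' St St') (hq : IntegrableOn q (Icc 0 T))
    (hqt : IntegrableOn qt (Icc 0 T)) (hρ : 1 ≤ ‖ρ‖) (hρ0 : 0 ≤ ρ.im) {x : ℝ} (hx : x ∈ Icc 0 T)
    {K : ℝ} (hΦ : ‖S x + m * φ x‖ ≤ K * ‖ρ‖⁻¹ * Real.exp (-ρ.im * x))
    (hΦt : ‖St x + m * φt x‖ ≤ K * ‖ρ‖⁻¹ * Real.exp (-ρ.im * x)) :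
    ‖S x * φt x - φ x * St x‖ ≤ K * ((1 + ‖ht‖) * Real.exp (∫ t in (0 : ℝ)..T, ‖qt t‖) +
      (1 + ‖h‖) * Real.exp (∫ t in (0 : ℝ)..T, ‖q t‖)) * ‖ρ‖⁻¹ := by
  have hφ := hF.left.norm_le_of_sq hq hρ hx
  have hφt := hFt.left.norm_le_of_sq hqt hρ hx
  rw [hF.left_zero, hF.left_deriv_zero, norm_one, abs_of_nonneg hρ0, Real.exp_add] at hφ
  rw [hFt.left_zero, hFt.left_deriv_zero, norm_one, abs_of_nonneg hρ0, Real.exp_add] at hφt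
  have hexp : Real.exp (-ρ.im * x) * Real.exp (ρ.im * x) = 1 := by
    rw [← Real.exp_add, neg_mul, neg_add_cancel, Real.exp_zero]
  have hK := (norm_nonneg _).trans hΦ
  calc ‖S x * φt x - φ x * St x‖
      = ‖(S x + m * φ x) * φt x - φ x * (St x + m * φt x)‖ := by ring_nf
    _ ≤ ‖S x + m * φ x‖ * ‖φt x‖ + ‖φ x‖ * ‖St x + m * φt x‖ := by
      rw [← norm_mul, ← norm_mul]
      exact norm_sub_le _ _
    _ ≤ _ := add_le_add (mul_le_mul hΦ hφt (norm_nonneg _) hK)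
      (mul_le_mul hφ hΦt (norm_nonneg _) (by positivity))
    _ = _ := by linear_combination K * ‖ρ‖⁻¹ *
      ((1 + ‖ht‖) * Real.exp (∫ t in (0 : ℝ)..T, ‖qt t‖) +
        (1 + ‖h‖) * Real.exp (∫ t in (0 : ℝ)..T, ‖q t‖)) * hexp

/-- The common ratio `P = φ / φt = S / St` equals `φ St' - S φt'`, and also `φt S' - St φ'` after
differentiating the cross relation; the Wronskian identities then give `P ^ 2 = 1`. -/
lemma eqOn_of_mul_eq_mul (hF : IsFundamentalPair q T h lam φ φ' S S')
    (hFt : IsFundamentalPair qt T ht lam φt φt' St St') (hT : 0 < T)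
    (hcross : ∀ x ∈ Icc 0 T, S x * φt x = φ x * St x) :
    EqOn φ φt (Icc 0 T) ∧ EqOn S St (Icc 0 T) := by
  set P : ℝ → ℂ := fun x => φ x * St' x - S x * φt' x
  have hderiv : ∀ x ∈ Icc 0 T, S' x * φt x + S x * φt' x = φ' x * St x + φ x * St' x :=
    hF.right.deriv_mul_add_eqOn hFt.left hF.left hFt.right hT hcross
  have hφ : ∀ x ∈ Icc 0 T, φ x = P x * φt x := fun x hx => by
    linear_combination -φ x * hFt.wronskian_eq_one hx + φt' x * hcross x hx
  have hS : ∀ x ∈ Icc 0 T, S x = P x * St x := fun x hx => by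
    linear_combination -S x * hFt.wronskian_eq_one hx + St' x * hcross x hx
  have hφt : ∀ x ∈ Icc 0 T, φt x = P x * φ x := fun x hx => by
    linear_combination
      -φt x * hF.wronskian_eq_one hx - φ' x * hcross x hx + φ x * hderiv x hx
  have hSt : ∀ x ∈ Icc 0 T, St x = P x * S x := fun x hx => by
    linear_combination
      -St x * hF.wronskian_eq_one hx - S' x * hcross x hx + S x * hderiv x hx
  have hsq : EqOn (P ^ 2) 1 (Icc 0 T) := fun x hx => by
    simp only [Pi.pow_apply, Pi.one_apply]
    linear_combination (1 - P x ^ 2) * hF.wronskian_eq_one hx - S' x * (hφ x hx + P x * hφt x hx) +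
      φ' x * (hS x hx + P x * hSt x hx)
  have hPcont : ContinuousOn P (Icc 0 T) :=
    (hF.left.1.continuousOn.mul hFt.right.2.continuousOn).sub
      (hF.right.1.continuousOn.mul hFt.left.2.continuousOn)
  have hP : EqOn P 1 (Icc 0 T) := by
    refine (isPreconnected_Icc.eq_one_or_eq_neg_one_of_sq_eq hPcont hsq).resolve_right fun h => ?_
    have h0 := h (left_mem_Icc.2 hT.le)
    norm_num [P, hF.left_zero, hF.right_zero, hFt.right_deriv_zero] at h0
  exact ⟨fun x hx => by rw [hφ x hx, hP hx, Pi.one_apply, one_mul],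
    fun x hx => by rw [hS x hx, hP hx, Pi.one_apply, one_mul]⟩

lemma ae_eq_of_eqOn (hF : IsFundamentalPair q T h lam φ φ' S S')
    (hFt : IsFundamentalPair qt T ht lam φt φt' St St') (hT : 0 < T) (hφ : EqOn φ φt (Icc 0 T))
    (hS : EqOn S St (Icc 0 T)) : ∀ᵐ x ∂volume.restrict (Icc 0 T), q x = qt x := by
  filter_upwards [hF.left.2.ae_eq_of_eqOn hFt.left.2 (hF.left.deriv_eqOn hFt.left hT hφ),
    hF.right.2.ae_eq_of_eqOn hFt.right.2 (hF.right.deriv_eqOn hFt.right hT hS),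
    ae_restrict_mem measurableSet_Icc] with x hxφ hxS hx
  rw [← hφ hx] at hxφ
  rw [← hS hx] at hxS
  linear_combination (qt x - q x) * hF.wronskian_eq_one hx + S' x * hxφ - φ' x * hxS

lemma eq_of_eqOn (hF : IsFundamentalPair q T h lam φ φ' S S')
    (hFt : IsFundamentalPair qt T ht lam φt φt' St St') (hT : 0 < T) (hφ : EqOn φ φt (Icc 0 T)) :
    h = ht := by
  rw [← hF.left_deriv_zero, ← hFt.left_deriv_zero]
  exact hF.left.deriv_eqOn hFt.left hT hφ (left_mem_Icc.2 hT.le)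

end SpectralParameter

variable {q qt : ℝ → ℂ} {T : ℝ} {h ht : ℂ} {φ φ' S S' φt φt' St St' : ℝ → ℂ → ℂ}

lemma differentiable_left (hF : ∀ lam, IsFundamentalPair q T h lam (φ · lam) (φ' · lam) (S · lam)
      (S' · lam)) (hq : IntegrableOn q (Icc 0 T)) {x : ℝ} (hx : x ∈ Icc 0 T) :
    Differentiable ℂ (φ x) := fun mu =>
  ((hF mu).hasDerivAt hq (fun lam => (hF lam).left) (fun lam => (hF lam).left_zero)
    (fun lam => (hF lam).left_deriv_zero) hx).differentiableAt

lemma differentiable_right (hF : ∀ lam, IsFundamentalPair q T h lam (φ · lam) (φ' · lam) (S · lam)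
      (S' · lam)) (hq : IntegrableOn q (Icc 0 T)) {x : ℝ} (hx : x ∈ Icc 0 T) :
    Differentiable ℂ (S x) := fun mu =>
  ((hF mu).hasDerivAt hq (fun lam => (hF lam).right) (fun lam => (hF lam).right_zero)
    (fun lam => (hF lam).right_deriv_zero) hx).differentiableAt

lemma mul_eq_mul_of_sector_decay
    (hF : ∀ lam, IsFundamentalPair q T h lam (φ · lam) (φ' · lam) (S · lam) (S' · lam))
    (hFt : ∀ lam, IsFundamentalPair qt T ht lam (φt · lam) (φt' · lam) (St · lam) (St' · lam))
    (hq : IntegrableOn q (Icc 0 T)) (hqt : IntegrableOn qt (Icc 0 T)) {x : ℝ} (hx : x ∈ Icc 0 T)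
    {M : ℂ → ℂ} {δ K R : ℝ} (hδ0 : 0 < δ) (hδπ : δ < Real.pi / 2)
    (hΦ : ∀ ρ : ℂ, arg ρ ∈ Icc δ (Real.pi - δ) → R ≤ ‖ρ‖ →
      ‖S x (ρ ^ 2) + M (ρ ^ 2) * φ x (ρ ^ 2)‖ ≤ K * ‖ρ‖⁻¹ * Real.exp (-ρ.im * x))
    (hΦt : ∀ ρ : ℂ, arg ρ ∈ Icc δ (Real.pi - δ) → R ≤ ‖ρ‖ →
      ‖St x (ρ ^ 2) + M (ρ ^ 2) * φt x (ρ ^ 2)‖ ≤ K * ‖ρ‖⁻¹ * Real.exp (-ρ.im * x)) (ρ : ℂ) :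
    S x (ρ ^ 2) * φt x (ρ ^ 2) = φ x (ρ ^ 2) * St x (ρ ^ 2) := by
  have hdiff := (((differentiable_right hF hq hx).mul (differentiable_left hFt hqt hx)).sub
    ((differentiable_left hF hq hx).mul (differentiable_right hFt hqt hx))).comp
      (differentiable_pow 2)
  have hgrow (ρ : ℂ) := (hF (ρ ^ 2)).norm_mul_sub_mul_le (hFt (ρ ^ 2)) hq hqt hx
  simp only [norm_pow, Real.sqrt_sq (norm_nonneg _)] at hgrow
  have hsec (ρ : ℂ) (harg : arg ρ ∈ Icc δ (Real.pi - δ)) (hρ : max R 1 ≤ ‖ρ‖) :=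
    (hF (ρ ^ 2)).norm_mul_sub_mul_le_of_norm_add_mul_le (hFt (ρ ^ 2)) hq hqt
      ((le_max_right R 1).trans hρ) (arg_nonneg_iff.1 (hδ0.le.trans harg.1)) hx
      (hΦ ρ harg ((le_max_left R 1).trans hρ)) (hΦt ρ harg ((le_max_left R 1).trans hρ))
  exact sub_eq_zero.1 (eq_zero_of_sector_decay hdiff (fun ρ => by simp) hgrow hδ0 hδπ hsec ρ)

end IsFundamentalPair

lemma isFundamentalPair_of_slSol {q : ℝ → ℝ} {T h : ℝ} {lam : ℂ} {C C' S S' : ℝ → ℂ}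
    (hq : IntegrableOn q (Icc 0 T)) (hC : SLSol q T lam C C') (hS : SLSol q T lam S S')
    (hC0 : C 0 = 1) (hC'0 : C' 0 = 0) (hS0 : S 0 = 0) (hS'0 : S' 0 = 1) :
    IsFundamentalPair (fun x => q x) T h lam (fun x => C x + h * S x) (fun x => C' x + h * S' x)
      S S' := by
  have hSsol := IsSLSolution.of_integral_eq hq.ofReal hS.1 hS.2
  exact ⟨(IsSLSolution.of_integral_eq hq.ofReal hC.1 hC.2).add (hSsol.const_mul h), hSsol,
    by simp [hC0, hS0], by simp [hC'0, hS'0], hS0, hS'0⟩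

lemma norm_le_of_norm_sub_inv_mul_exp_le {w ρ : ℂ} {K x : ℝ} (hK : 0 ≤ K) (hρ : 1 ≤ ‖ρ‖)
    (hw : ‖w - (I * ρ)⁻¹ * exp (I * ρ * x)‖ ≤ K * (‖ρ‖ ^ 2)⁻¹ * Real.exp (-ρ.im * x)) :
    ‖w‖ ≤ (1 + K) * ‖ρ‖⁻¹ * Real.exp (-ρ.im * x) := by
  have hmain : ‖(I * ρ)⁻¹ * exp (I * ρ * x)‖ = ‖ρ‖⁻¹ * Real.exp (-ρ.im * x) := by
    simp [norm_exp]
  calc ‖w‖ ≤ K * (‖ρ‖ ^ 2)⁻¹ * Real.exp (-ρ.im * x) + ‖ρ‖⁻¹ * Real.exp (-ρ.im * x) := by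
        rw [← hmain]
        exact (norm_le_norm_sub_add _ _).trans (by gcongr)
    _ ≤ K * ‖ρ‖⁻¹ * Real.exp (-ρ.im * x) + ‖ρ‖⁻¹ * Real.exp (-ρ.im * x) := by
        gcongr
        exact le_self_pow₀ hρ two_ne_zero
    _ = (1 + K) * ‖ρ‖⁻¹ * Real.exp (-ρ.im * x) := by ring

theorem weyl_asymptotics_uniqueness_general {T : ℝ} (hT : 0 < T) {q qt : ℝ → ℂ}
    (hq : IntegrableOn q (Icc 0 T)) (hqt : IntegrableOn qt (Icc 0 T)) {h ht : ℂ}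
    {φ φ' S S' φt φt' St St' : ℝ → ℂ → ℂ}
    (hF : ∀ lam, IsFundamentalPair q T h lam (φ · lam) (φ' · lam) (S · lam) (S' · lam))
    (hFt : ∀ lam, IsFundamentalPair qt T ht lam (φt · lam) (φt' · lam) (St · lam) (St' · lam))
    {M : ℂ → ℂ} {δ K R : ℝ} (hδ0 : 0 < δ) (hδπ : δ < Real.pi / 2)
    (hΦ : ∀ ρ : ℂ, arg ρ ∈ Icc δ (Real.pi - δ) → R ≤ ‖ρ‖ → ∀ x ∈ Icc 0 T,
      ‖S x (ρ ^ 2) + M (ρ ^ 2) * φ x (ρ ^ 2)‖ ≤ K * ‖ρ‖⁻¹ * Real.exp (-ρ.im * x))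
    (hΦt : ∀ ρ : ℂ, arg ρ ∈ Icc δ (Real.pi - δ) → R ≤ ‖ρ‖ → ∀ x ∈ Icc 0 T,
      ‖St x (ρ ^ 2) + M (ρ ^ 2) * φt x (ρ ^ 2)‖ ≤ K * ‖ρ‖⁻¹ * Real.exp (-ρ.im * x)) :
    (∀ᵐ x ∂volume.restrict (Icc 0 T), q x = qt x) ∧ h = ht := by
  have hcross : ∀ x ∈ Icc 0 T, S x (0 ^ 2) * φt x (0 ^ 2) = φ x (0 ^ 2) * St x (0 ^ 2) :=
    fun x hx => IsFundamentalPair.mul_eq_mul_of_sector_decay hF hFt hq hqt hx hδ0 hδπ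
      (fun ρ harg hρ => hΦ ρ harg hρ x hx) (fun ρ harg hρ => hΦt ρ harg hρ x hx) 0
  obtain ⟨hφ, hS⟩ := (hF (0 ^ 2)).eqOn_of_mul_eq_mul (hFt (0 ^ 2)) hT hcross
  exact ⟨(hF _).ae_eq_of_eqOn (hFt _) hT hφ hS, (hF _).eq_of_eqOn (hFt _) hT hφ⟩

/-- if Φ = S + M·φ and Φ̃ = S̃ + M·φ̃ (same function M) both satisfy the
Weyl-solution asymptotics |Φ^{(ν)}(x,ρ²) − (iρ)^{ν−1}e^{iρx}| ≤ K|ρ|^{ν−2}e^{−τx}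
in the sector arg ρ ∈ [δ, π−δ], |ρ| ≥ R, uniformly in x ∈ [0,T], then q = q̃ a.e.
on [0,T] and h = h̃. -/
theorem weyl_asymptotics_uniqueness
    (T : ℝ) (hT : 0 < T) (q qt : ℝ → ℝ)
    (hq : IntegrableOn q (Icc 0 T)) (hqt : IntegrableOn qt (Icc 0 T))
    (h ht : ℝ)
    (S S' C C' St St' Ct Ct' : ℝ → ℂ → ℂ)
    (hS : ∀ lam : ℂ, SLSol q T lam (fun x => S x lam) (fun x => S' x lam))
    (hC : ∀ lam : ℂ, SLSol q T lam (fun x => C x lam) (fun x => C' x lam))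
    (hSt : ∀ lam : ℂ, SLSol qt T lam (fun x => St x lam) (fun x => St' x lam))
    (hCt : ∀ lam : ℂ, SLSol qt T lam (fun x => Ct x lam) (fun x => Ct' x lam))
    (hS0 : ∀ lam : ℂ, S 0 lam = 0) (hS'0 : ∀ lam : ℂ, S' 0 lam = 1)
    (hC0 : ∀ lam : ℂ, C 0 lam = 1) (hC'0 : ∀ lam : ℂ, C' 0 lam = 0)
    (hSt0 : ∀ lam : ℂ, St 0 lam = 0) (hSt'0 : ∀ lam : ℂ, St' 0 lam = 1)
    (hCt0 : ∀ lam : ℂ, Ct 0 lam = 1) (hCt'0 : ∀ lam : ℂ, Ct' 0 lam = 0)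
    (M : ℂ → ℂ)
    (δ : ℝ) (hδ0 : 0 < δ) (hδπ : δ < Real.pi / 2)
    (K R : ℝ) (hK : 0 < K) (hR : 1 ≤ R)
    -- asymptotics of Φ = S + M·φ, where φ = C + h·S
    (hΦ : ∀ ρ : ℂ, arg ρ ∈ Icc δ (Real.pi - δ) → R ≤ ‖ρ‖ → ∀ x ∈ Icc (0:ℝ) T,
      ‖(S x (ρ ^ 2) + M (ρ ^ 2) * (C x (ρ ^ 2) + (h : ℂ) * S x (ρ ^ 2)))
          - (I * ρ)⁻¹ * Complex.exp (I * ρ * x)‖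
        ≤ K * (‖ρ‖ ^ 2)⁻¹ * Real.exp (-ρ.im * x) ∧
      ‖(S' x (ρ ^ 2) + M (ρ ^ 2) * (C' x (ρ ^ 2) + (h : ℂ) * S' x (ρ ^ 2)))
          - Complex.exp (I * ρ * x)‖
        ≤ K * ‖ρ‖⁻¹ * Real.exp (-ρ.im * x))
    -- the same asymptotics for Φ̃ = S̃ + M·φ̃, where φ̃ = C̃ + h̃·S̃
    (hΦt : ∀ ρ : ℂ, arg ρ ∈ Icc δ (Real.pi - δ) → R ≤ ‖ρ‖ → ∀ x ∈ Icc (0:ℝ) T,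
      ‖(St x (ρ ^ 2) + M (ρ ^ 2) * (Ct x (ρ ^ 2) + (ht : ℂ) * St x (ρ ^ 2)))
          - (I * ρ)⁻¹ * Complex.exp (I * ρ * x)‖
        ≤ K * (‖ρ‖ ^ 2)⁻¹ * Real.exp (-ρ.im * x) ∧
      ‖(St' x (ρ ^ 2) + M (ρ ^ 2) * (Ct' x (ρ ^ 2) + (ht : ℂ) * St' x (ρ ^ 2)))
          - Complex.exp (I * ρ * x)‖
        ≤ K * ‖ρ‖⁻¹ * Real.exp (-ρ.im * x)) :
    (∀ᵐ x ∂(volume.restrict (Icc (0:ℝ) T)), q x = qt x) ∧ h = ht := by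
  have hF (lam : ℂ) := isFundamentalPair_of_slSol (h := h) hq (hC lam) (hS lam) (hC0 lam) (hC'0 lam)
    (hS0 lam) (hS'0 lam)
  have hFt (lam : ℂ) := isFundamentalPair_of_slSol (h := ht) hqt (hCt lam) (hSt lam) (hCt0 lam)
    (hCt'0 lam) (hSt0 lam) (hSt'0 lam)
  obtain ⟨hae, hh⟩ := weyl_asymptotics_uniqueness_general (M := M) hT hq.ofReal hqt.ofReal hF hFt
    hδ0 hδπ
    (fun ρ harg hρ x hx =>
      norm_le_of_norm_sub_inv_mul_exp_le hK.le (hR.trans hρ) (hΦ ρ harg hρ x hx).1)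
    (fun ρ harg hρ x hx =>
      norm_le_of_norm_sub_inv_mul_exp_le hK.le (hR.trans hρ) (hΦt ρ harg hρ x hx).1)
  exact ⟨hae.mono fun x hx => ofReal_injective hx, ofReal_injective hh⟩
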